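/- For the phase-space ODE system, suppose ε(t) ≤ ε_max for all t, where ε_max < ω, and define D(t) = (2ω − ε_max)·√(1 + x(t)² + y(t)²) + ε_max·x(t). Then D is differentiable with D'(t) = 2ω·(ε(t) − ε_max)·y(t) for every t; in particular, D is nonincreasing on any interval on which y(t) ≥ 0. -/

import Mathlib

/-!
For a control held constant at `c`, the flow conserves the mean energy, which up to scaling and
an additive constant is `(2ω - c) cosh(2r) + c x`. The function `D` is this energy at `c = εmax`,
evaluated along a trajectory driven by `ε`. The rotation part of the flow leaves
`cosh(2r) = √(1 + x² + y²)` unchanged, so `cosh(2r)` grows at rate `ε y`, and only the detuning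
`ε - εmax` contributes to `D'`.
-/

/-- The mean energy of `ω a†a - (c/4)(a + a†)²` in the squeezed vacuum with phase-space coordinates
`x = sinh(2r) cos φ` and `y = sinh(2r) sin φ`, normalized as `4⟨H⟩ + 2ω` to avoid fractions and the
vacuum offset. The control value `c` is a parameter of its own, so that the energy of one control
can be followed along the flow of another. -/
noncomputable def scaledEnergy (ω c x y : ℝ) : ℝ :=
  (2 * ω - c) * √(1 + x ^ 2 + y ^ 2) + c * x

section Trajectory

variable {x y : ℝ → ℝ} {s : Set ℝ} {t : ℝ}

lemma hasDerivWithinAt_sqrt_one_add_sq_add_sq {x' y' : ℝ}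
    (hx : HasDerivWithinAt x x' s t) (hy : HasDerivWithinAt y y' s t) :
    HasDerivWithinAt (fun τ => √(1 + x τ ^ 2 + y τ ^ 2))
      ((x t * x' + y t * y') / √(1 + x t ^ 2 + y t ^ 2)) s t := by
  have hne : 1 + x t ^ 2 + y t ^ 2 ≠ 0 := by positivity
  refine ((((hx.fun_pow 2).const_add 1).fun_add (hy.fun_pow 2)).sqrt hne).congr_deriv ?_
  push_cast
  field_simp

lemma hasDerivWithinAt_sqrt_of_rotation_add_squeezing {k e : ℝ}
    (hx : HasDerivWithinAt x (-k * y t) s t)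
    (hy : HasDerivWithinAt y (k * x t + e * √(1 + x t ^ 2 + y t ^ 2)) s t) :
    HasDerivWithinAt (fun τ => √(1 + x τ ^ 2 + y τ ^ 2)) (e * y t) s t := by
  refine (hasDerivWithinAt_sqrt_one_add_sq_add_sq hx hy).congr_deriv ?_
  have hne : √(1 + x t ^ 2 + y t ^ 2) ≠ 0 := by positivity
  rw [div_eq_iff hne]
  ring

lemma hasDerivWithinAt_scaledEnergy {ω e : ℝ} (c : ℝ)
    (hx : HasDerivWithinAt x (-(2 * ω - e) * y t) s t)
    (hy : HasDerivWithinAt y ((2 * ω - e) * x t + e * √(1 + x t ^ 2 + y t ^ 2)) s t) :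
    HasDerivWithinAt (fun τ => scaledEnergy ω c (x τ) (y τ)) (2 * ω * (e - c) * y t) s t := by
  have hcosh := hasDerivWithinAt_sqrt_of_rotation_add_squeezing hx hy
  refine ((hcosh.const_mul (2 * ω - c)).fun_add (hx.const_mul c)).congr_deriv ?_
  ring

theorem D_derivative_and_monotone_general {ω : ℝ} (εmax : ℝ) (hω : 0 ≤ ω) {ε : ℝ → ℝ}
    (hx : ∀ t ∈ s, HasDerivWithinAt x (-(2 * ω - ε t) * y t) s t)
    (hy : ∀ t ∈ s, HasDerivWithinAt y
      ((2 * ω - ε t) * x t + ε t * √(1 + x t ^ 2 + y t ^ 2)) s t) :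
    (∀ t ∈ s, HasDerivWithinAt (fun τ => scaledEnergy ω εmax (x τ) (y τ))
      (2 * ω * (ε t - εmax) * y t) s t) ∧
    (Convex ℝ s → (∀ t ∈ s, ε t ≤ εmax) → (∀ t ∈ s, 0 ≤ y t) →
      AntitoneOn (fun τ => scaledEnergy ω εmax (x τ) (y τ)) s) := by
  have hD t (ht : t ∈ s) := hasDerivWithinAt_scaledEnergy εmax (hx t ht) (hy t ht)
  refine ⟨hD, fun hs hε hy₀ => antitoneOn_of_hasDerivWithinAt_nonpos hs
    (fun t ht => (hD t ht).continuousWithinAt)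
    (fun t ht => (hD t (interior_subset ht)).mono interior_subset) fun t ht => ?_⟩
  have hts : t ∈ s := interior_subset ht
  have hdetuning : 2 * ω * (ε t - εmax) ≤ 0 :=
    mul_nonpos_of_nonneg_of_nonpos (by positivity) (sub_nonpos.2 (hε t hts))
  exact mul_nonpos_of_nonpos_of_nonneg hdetuning (hy₀ t hts)

end Trajectory

/-- for the phase-space ODE system with `ε(t) ≤ ε_max < ω` for all `t`,
the function `D(t) = (2ω − ε_max)·√(1 + x(t)² + y(t)²) + ε_max·x(t)` is differentiable
with `D'(t) = 2ω·(ε(t) − ε_max)·y(t)`; in particular `D` is nonincreasing on any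
interval on which `y ≥ 0`. -/
theorem D_derivative_and_monotone
    (ω : ℝ) (hω : 0 < ω) (ε x y : ℝ → ℝ) (hε : Continuous ε)
    (εmax : ℝ) (hεmax : εmax < ω) (hbd : ∀ t, ε t ≤ εmax)
    (hx : ∀ t, HasDerivAt x (-(2 * ω - ε t) * y t) t)
    (hy : ∀ t, HasDerivAt y ((2 * ω - ε t) * x t
      + ε t * Real.sqrt (1 + (x t) ^ 2 + (y t) ^ 2)) t) :
    (∀ t, HasDerivAt
        (fun s => (2 * ω - εmax) * Real.sqrt (1 + (x s) ^ 2 + (y s) ^ 2) + εmax * x s)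
        (2 * ω * (ε t - εmax) * y t) t)
    ∧ (∀ a b : ℝ, a ≤ b → (∀ t ∈ Set.Icc a b, 0 ≤ y t) →
        AntitoneOn
          (fun s => (2 * ω - εmax) * Real.sqrt (1 + (x s) ^ 2 + (y s) ^ 2) + εmax * x s)
          (Set.Icc a b)) := by
  have h (s : Set ℝ) := D_derivative_and_monotone_general (s := s) εmax hω.le
    (fun t _ => (hx t).hasDerivWithinAt) (fun t _ => (hy t).hasDerivWithinAt)
  exact ⟨fun t => hasDerivWithinAt_univ.1 ((h Set.univ).1 t (Set.mem_univ t)),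
    fun a b _ hy₀ => (h (Set.Icc a b)).2 (convex_Icc a b) (fun t _ => hbd t) hy₀⟩
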